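/- Let v > ε > 0 be constants and let f : ℝ → ℝ be continuous and bounded on [T,∞). Then there exists a unique bounded differentiable solution u : [T,∞) → ℝ of ∂_t u - (ε + v)·u = e^{-ε t}·u² + e^{(ε - v)t}·f(t) with lim_{t→∞} u(t) = 0, provided T is sufficiently large. -/

import Mathlib

/-!
For `a > 0`, every nonzero solution of `u' = a u` grows like `exp (a t)`, so `u' = a u + g` with
bounded `g` has only one bounded solution: the Duhamel integral taken from `+∞`, an operator of norm
at most `1 / a` which preserves decay at infinity. When `g = F(t, u)` has Lipschitz constant `K < a`
in `u` on a small ball, composing with this operator gives a contraction on the decaying functions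
in that ball, and its fixed point is the solution. Starting at a late time makes the forcing
`F(t, 0)` so small that the ball is mapped to itself.

For uniqueness, the difference `w` of two solutions of the Riccati equation satisfies
`‖w' - a w‖ ≤ k(t) ‖w‖` with `k → 0`. As soon as `k ≤ a`, `‖w‖` cannot decrease, so it vanishes
because it tends to zero; the vanishing is carried back to the initial time by Grönwall's
inequality.
-/

open Filter MeasureTheory Metric Real Set Topology
open scoped BoundedContinuousFunction NNReal

section BackwardDuhamel

variable {E : Type*} [NormedAddCommGroup E] [NormedSpace ℝ E] {a : ℝ}

/-- The Duhamel integral from `+∞`: for `a > 0` and bounded continuous `g`, it is the bounded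
solution of `u' = a u + g`. -/
noncomputable def backwardDuhamel (a : ℝ) (g : ℝ → E) (t : ℝ) : E :=
  -∫ s in Ioi t, exp (a * (t - s)) • g s

lemma exp_mul_sub_eq (a t s : ℝ) : exp (a * (t - s)) = exp (a * t) * exp (-a * s) := by
  rw [← exp_add]
  ring_nf

lemma integrableOn_exp_mul_sub_Ioi (ha : 0 < a) (t c : ℝ) :
    IntegrableOn (fun s ↦ exp (a * (t - s))) (Ioi c) := by
  simp only [exp_mul_sub_eq]
  exact (integrableOn_exp_mul_Ioi (neg_neg_of_pos ha) c).const_mul _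

lemma integral_exp_mul_sub_Ioi (ha : 0 < a) (t : ℝ) :
    ∫ s in Ioi t, exp (a * (t - s)) = 1 / a := by
  simp only [exp_mul_sub_eq]
  rw [integral_const_mul, integral_exp_mul_Ioi (neg_neg_of_pos ha), neg_div_neg_eq, ← mul_div_assoc,
    ← exp_mul_sub_eq, sub_self, mul_zero, exp_zero]

lemma norm_backwardDuhamel_le (ha : 0 < a) {g : ℝ → E} {C t : ℝ} (hg : ∀ s > t, ‖g s‖ ≤ C) :
    ‖backwardDuhamel a g t‖ ≤ C / a := by
  have bound : ∀ᵐ s ∂volume.restrict (Ioi t),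
      ‖exp (a * (t - s)) • g s‖ ≤ exp (a * (t - s)) * C := by
    filter_upwards [ae_restrict_mem measurableSet_Ioi] with s hs
    rw [norm_smul, norm_of_nonneg (exp_nonneg _)]
    gcongr
    exact hg s hs
  calc ‖backwardDuhamel a g t‖
      ≤ ∫ s in Ioi t, exp (a * (t - s)) * C := by
        rw [backwardDuhamel, norm_neg]
        exact norm_integral_le_of_norm_le ((integrableOn_exp_mul_sub_Ioi ha t t).mul_const C) bound
    _ = C / a := by rw [integral_mul_const, integral_exp_mul_sub_Ioi ha, one_div_mul_eq_div]

lemma tendsto_backwardDuhamel_atTop (ha : 0 < a) {g : ℝ → E} (hg : Tendsto g atTop (𝓝 0)) :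
    Tendsto (backwardDuhamel a g) atTop (𝓝 0) := by
  rw [NormedAddGroup.tendsto_nhds_zero] at hg ⊢
  intro δ hδ
  obtain ⟨N, hN⟩ := eventually_atTop.1 (hg (a * (δ / 2)) (by positivity))
  filter_upwards [eventually_ge_atTop N] with t ht
  calc ‖backwardDuhamel a g t‖
      ≤ a * (δ / 2) / a := norm_backwardDuhamel_le ha fun s hs ↦ (hN s (ht.trans hs.le)).le
    _ = δ / 2 := mul_div_cancel_left₀ _ ha.ne'
    _ < δ := half_lt_self hδ

lemma integrableOn_exp_mul_sub_smul_Ioi (ha : 0 < a) (g : ℝ →ᵇ E) (t c : ℝ) :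
    IntegrableOn (fun s ↦ exp (a * (t - s)) • g s) (Ioi c) :=
  (integrableOn_exp_mul_sub_Ioi ha t c).smul_bdd ‖g‖ g.continuous.aestronglyMeasurable
    (.of_forall g.norm_coe_le_norm)

lemma dist_backwardDuhamel_le (ha : 0 < a) {g h : ℝ →ᵇ E} {C : ℝ}
    (hgh : ∀ s, dist (g s) (h s) ≤ C) (t : ℝ) :
    dist (backwardDuhamel a g t) (backwardDuhamel a h t) ≤ C / a := by
  have hsub : backwardDuhamel a g t - backwardDuhamel a h t =
      backwardDuhamel a (fun s ↦ g s - h s) t := by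
    simp only [backwardDuhamel, smul_sub]
    rw [integral_sub (integrableOn_exp_mul_sub_smul_Ioi ha g t t)
      (integrableOn_exp_mul_sub_smul_Ioi ha h t t)]
    abel
  rw [dist_eq_norm, hsub]
  exact norm_backwardDuhamel_le ha fun s _ ↦ (dist_eq_norm (g s) (h s)).symm.trans_le (hgh s)

lemma hasDerivAt_integral_Ioi [CompleteSpace E] {f : ℝ → E} (hf : Continuous f)
    (hint : ∀ x, IntegrableOn f (Ioi x)) (t : ℝ) :
    HasDerivAt (fun x ↦ ∫ s in Ioi x, f s) (-f t) t := by
  have split : (fun x ↦ ∫ s in Ioi x, f s) =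
      fun x ↦ (∫ s in Ioi t, f s) - ∫ s in t..x, f s := by
    funext x
    rw [← intervalIntegral.integral_interval_add_Ioi (hint t) (hint x), add_sub_cancel_left]
  rw [split]
  exact (hf.integral_hasStrictDerivAt t t).hasDerivAt.const_sub _

lemma hasDerivAt_backwardDuhamel [CompleteSpace E] (ha : 0 < a) (g : ℝ →ᵇ E) (t : ℝ) :
    HasDerivAt (backwardDuhamel a g) (a • backwardDuhamel a g t + g t) t := by
  have factor : ∀ x, backwardDuhamel a g x =
      exp (a * x) • -∫ s in Ioi x, exp (a * (0 - s)) • g s := by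
    intro x
    rw [backwardDuhamel, smul_neg, ← integral_smul]
    simp only [smul_smul, ← exp_add]
    ring_nf
  have hexp : HasDerivAt (fun x ↦ exp (a * x)) (exp (a * t) * a) t := by
    simpa using ((hasDerivAt_id t).const_mul a).exp
  have htail := (hasDerivAt_integral_Ioi (by fun_prop)
    (integrableOn_exp_mul_sub_smul_Ioi ha g 0) t).neg
  refine ((hexp.smul htail).congr_of_eventuallyEq (.of_forall factor)).congr_deriv ?_
  rw [factor t, neg_neg, smul_smul, smul_smul, ← exp_add, mul_comm a (exp _), ← mul_add,
    zero_sub, add_neg_cancel, mul_zero, exp_zero, one_smul, add_comm, Pi.neg_apply]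

end BackwardDuhamel

section Existence

variable {E : Type*} [NormedAddCommGroup E] {r : ℝ} {K : ℝ≥0}

/-- The bounded continuous functions of norm at most `r` that tend to `0` at `+∞`: the complete
metric space on which the fixed-point argument is run. -/
def decayingBall (E : Type*) [NormedAddCommGroup E] (r : ℝ) : Set (ℝ →ᵇ E) :=
  {u | ‖u‖ ≤ r ∧ Tendsto u atTop (𝓝 0)}

lemma isClosed_decayingBall : IsClosed (decayingBall E r) := by
  refine (isClosed_le continuous_norm continuous_const).inter <|
    isClosed_iff_forall_filter.2 fun u l _ hmem hlim ↦ ?_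
  exact (BoundedContinuousFunction.tendsto_iff_tendstoUniformly.1 hlim)
    |>.tendsto_of_eventually_tendsto (le_principal_iff.1 hmem) tendsto_const_nhds

lemma norm_le_add_of_lipschitzOnWith_closedBall {f : E → E}
    (hf : LipschitzOnWith K f (closedBall 0 r)) {x : E} (hx : ‖x‖ ≤ r) :
    ‖f x‖ ≤ K * ‖x‖ + ‖f 0‖ := by
  have hdist : ‖f x - f 0‖ ≤ K * ‖x - 0‖ :=
    hf.norm_sub_le (by simpa using hx) (by simpa using (norm_nonneg x).trans hx)
  rw [sub_zero] at hdist
  linarith [norm_le_norm_sub_add (f x) (f 0)]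

lemma exists_decaying_superposition {F : ℝ → E → E} {b : ℝ} (hF : Continuous F.uncurry)
    (hlip : ∀ t, LipschitzOnWith K (F t) (closedBall 0 r)) (hbound : ∀ t, ‖F t 0‖ ≤ b)
    (hlim : Tendsto (F · 0) atTop (𝓝 0)) {u : ℝ →ᵇ E} (hu : u ∈ decayingBall E r) :
    ∃ g ∈ decayingBall E (K * r + b), ∀ t, g t = F t (u t) := by
  have hur : ∀ t, ‖u t‖ ≤ r := fun t ↦ (u.norm_coe_le_norm t).trans hu.1
  have hle : ∀ t, ‖F t (u t)‖ ≤ K * ‖u t‖ + ‖F t 0‖ := fun t ↦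
    norm_le_add_of_lipschitzOnWith_closedBall (hlip t) (hur t)
  have hle' : ∀ t, ‖F t (u t)‖ ≤ K * r + b := fun t ↦
    (hle t).trans (by gcongr; exacts [hur t, hbound t])
  have hcont : Continuous fun t ↦ F t (u t) := hF.comp (continuous_id.prodMk u.continuous)
  refine ⟨.ofNormedAddCommGroup _ hcont _ hle', ⟨?_, ?_⟩, fun _ ↦ rfl⟩
  · exact BoundedContinuousFunction.norm_ofNormedAddCommGroup_le _
      ((norm_nonneg _).trans (hle' 0)) hle'
  · exact squeeze_zero_norm hle (by simpa using (hu.2.norm.const_mul (K : ℝ)).add hlim.norm)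

variable [NormedSpace ℝ E] [CompleteSpace E] {a : ℝ}

lemma exists_mem_decayingBall_eq_backwardDuhamel (ha : 0 < a) {g : ℝ →ᵇ E}
    (hg : g ∈ decayingBall E (a * r)) : ∃ w ∈ decayingBall E r, ⇑w = backwardDuhamel a g := by
  have hcont : Continuous (backwardDuhamel a g) :=
    continuous_iff_continuousAt.2 fun t ↦ (hasDerivAt_backwardDuhamel ha g t).continuousAt
  have hle : ∀ t, ‖backwardDuhamel a g t‖ ≤ r := fun t ↦
    (norm_backwardDuhamel_le ha fun s _ ↦ (g.norm_coe_le_norm s).trans hg.1).trans_eq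
      (mul_div_cancel_left₀ r ha.ne')
  exact ⟨.ofNormedAddCommGroup _ hcont r hle,
    ⟨BoundedContinuousFunction.norm_ofNormedAddCommGroup_le _ ((norm_nonneg _).trans (hle 0)) hle,
      tendsto_backwardDuhamel_atTop ha hg.2⟩, rfl⟩

theorem exists_decaying_solution_of_lipschitzOnWith {F : ℝ → E → E} (hK : K < a)
    (hF : Continuous F.uncurry) (hlip : ∀ t, LipschitzOnWith K (F t) (closedBall 0 r))
    (hbound : ∀ t, ‖F t 0‖ ≤ (a - K) * r) (hlim : Tendsto (F · 0) atTop (𝓝 0)) :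
    ∃ u : ℝ → E, (∀ t, HasDerivAt u (a • u t + F t (u t)) t) ∧ (∀ t, ‖u t‖ ≤ r) ∧
      Tendsto u atTop (𝓝 0) := by
  have ha : 0 < a := K.coe_nonneg.trans_lt hK
  have hr : 0 ≤ r :=
    nonneg_of_mul_nonneg_right ((norm_nonneg _).trans (hbound 0)) (sub_pos.2 hK)
  have hradius : K * r + (a - K) * r = a * r := by ring
  choose! G hG_mem hG using fun u ↦ exists_decaying_superposition hF hlip hbound hlim (u := u)
  rw [hradius] at hG_mem
  choose! Φ hΦ_mem hΦ using fun u hu ↦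
    exists_mem_decayingBall_eq_backwardDuhamel ha (hG_mem u hu)
  have hball : ∀ {u : ℝ →ᵇ E}, u ∈ decayingBall E r → ∀ t, u t ∈ closedBall 0 r := fun hu t ↦
    mem_closedBall_zero_iff.2 ((BoundedContinuousFunction.norm_coe_le_norm _ t).trans hu.1)
  have hcontr : ContractingWith (K / a.toNNReal) (MapsTo.restrict Φ _ _ hΦ_mem) := by
    refine ⟨?_, LipschitzWith.of_dist_le_mul fun u v ↦ ?_⟩
    · rwa [div_lt_one (by simpa), Real.lt_toNNReal_iff_coe_lt]
    refine (BoundedContinuousFunction.dist_le (by positivity)).2 fun t ↦ ?_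
    have hsource : ∀ s, dist (G u s) (G v s) ≤ K * dist u v := fun s ↦ by
      rw [hG u u.2, hG v v.2]
      exact ((hlip s).dist_le_mul _ (hball u.2 s) _ (hball v.2 s)).trans <| by
        gcongr
        exact BoundedContinuousFunction.dist_coe_le_dist s
    calc dist (Φ u t) (Φ v t) ≤ K * dist u v / a := by
          rw [hΦ u u.2, hΦ v v.2]
          exact dist_backwardDuhamel_le ha hsource t
      _ = ↑(K / a.toNNReal) * dist u v := by
          rw [NNReal.coe_div, coe_toNNReal a ha.le, div_mul_eq_mul_div]
  obtain ⟨u, hu_mem, hu_fix, -⟩ := hcontr.exists_fixedPoint' isClosed_decayingBall.isComplete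
    hΦ_mem (x := 0) ⟨by simpa, tendsto_const_nhds⟩ (edist_ne_top _ _)
  have hu_eq : ⇑u = backwardDuhamel a (G u) := by rw [← hΦ u hu_mem, hu_fix]
  refine ⟨u, fun t ↦ ?_, fun t ↦ (u.norm_coe_le_norm t).trans hu_mem.1, hu_mem.2⟩
  have hderiv := hasDerivAt_backwardDuhamel ha (G u) t
  rwa [← hu_eq, hG u hu_mem] at hderiv

end Existence

section Uniqueness

variable {E : Type*} [NormedAddCommGroup E] [NormedSpace ℝ E] {w w' : ℝ → E} {a : ℝ}

lemma norm_le_norm_mul_exp_of_norm_deriv_sub_smul_le {C t₀ t₁ : ℝ} (h : t₀ ≤ t₁)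
    (hw : ∀ t ∈ Icc t₀ t₁, HasDerivAt w (w' t) t)
    (hbound : ∀ t ∈ Icc t₀ t₁, ‖w' t - a • w t‖ ≤ C * ‖w t‖) :
    ‖w t₀‖ ≤ ‖w t₁‖ * exp ((C - a) * (t₁ - t₀)) := by
  -- Removing the factor `exp (a * t)` and reversing time turns this into Grönwall's inequality.
  let y : ℝ → E := fun s ↦ exp (a * (s + t₀)) • w (-s)
  let y' : ℝ → E := fun s ↦ exp (a * (s + t₀)) • -(w' (-s) - a • w (-s))
  have hmem : ∀ s ∈ Icc (-t₁) (-t₀), -s ∈ Icc t₀ t₁ := fun s hs ↦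
    ⟨le_neg_of_le_neg hs.2, neg_le.1 hs.1⟩
  have hy : ∀ s ∈ Icc (-t₁) (-t₀), HasDerivAt y (y' s) s := by
    intro s hs
    have hexp : HasDerivAt (fun s ↦ exp (a * (s + t₀))) (exp (a * (s + t₀)) * a) s := by
      simpa using (((hasDerivAt_id s).add_const t₀).const_mul a).exp
    refine (hexp.smul ((hw _ (hmem s hs)).scomp s (hasDerivAt_neg s))).congr_deriv ?_
    simp only [y', Function.comp_apply]
    module
  have hy_le : ∀ s ∈ Icc (-t₁) (-t₀), ‖y' s‖ ≤ C * ‖y s‖ := by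
    intro s hs
    simp only [y, y', norm_smul, norm_neg, norm_of_nonneg (exp_nonneg _)]
    rw [mul_left_comm]
    gcongr
    exact hbound _ (hmem s hs)
  have hgronwall := norm_le_gronwallBound_of_norm_deriv_right_le (ε := 0)
    (fun s hs ↦ (hy s hs).continuousAt.continuousWithinAt)
    (fun s hs ↦ (hy s (Ico_subset_Icc_self hs)).hasDerivWithinAt) le_rfl
    (fun s hs ↦ by simpa using hy_le s (Ico_subset_Icc_self hs)) (-t₀)
    (right_mem_Icc.2 (neg_le_neg h))
  calc ‖w t₀‖ = ‖y (-t₀)‖ := by simp [y]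
    _ ≤ ‖y (-t₁)‖ * exp (C * (-t₀ - -t₁)) := by rwa [gronwallBound_ε0] at hgronwall
    _ = ‖w t₁‖ * exp ((C - a) * (t₁ - t₀)) := by
      simp only [y, norm_smul, norm_of_nonneg (exp_nonneg _), neg_neg]
      rw [mul_comm (exp _), mul_assoc, ← exp_add]
      ring_nf

theorem eq_zero_of_norm_deriv_sub_smul_le_of_tendsto_zero {k : ℝ → ℝ} {T : ℝ}
    (hw : ∀ t ≥ T, HasDerivAt w (w' t) t) (hk : ContinuousOn k (Ici T))
    (hbound : ∀ t ≥ T, ‖w' t - a • w t‖ ≤ k t * ‖w t‖) (hka : ∀ᶠ t in atTop, k t ≤ a)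
    (hlim : Tendsto w atTop (𝓝 0)) : ∀ t ≥ T, w t = 0 := by
  obtain ⟨N, hN⟩ := eventually_atTop.1 hka
  have hlate : ∀ t ≥ max T N, w t = 0 := by
    intro t ht
    have hmono : ∀ s ≥ t, ‖w t‖ ≤ ‖w s‖ := by
      intro s hts
      have hT : ∀ x ∈ Icc t s, T ≤ x := fun x hx ↦ (le_max_left T N).trans (ht.trans hx.1)
      have hx_le : ∀ x ∈ Icc t s, ‖w' x - a • w x‖ ≤ a * ‖w x‖ := fun x hx ↦
        (hbound x (hT x hx)).trans <| mul_le_mul_of_nonneg_right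
          (hN x ((le_max_right T N).trans (ht.trans hx.1))) (norm_nonneg _)
      simpa using norm_le_norm_mul_exp_of_norm_deriv_sub_smul_le hts
        (fun x hx ↦ hw x (hT x hx)) hx_le
    exact norm_le_zero_iff.1 <|
      ge_of_tendsto (by simpa using hlim.norm) ((eventually_ge_atTop t).mono hmono)
  intro t ht
  let t₁ := max t (max T N)
  have hT : ∀ x ∈ Icc t t₁, T ≤ x := fun x hx ↦ ht.trans hx.1
  obtain ⟨C, hC⟩ := isCompact_Icc.exists_bound_of_continuousOn (hk.mono hT)
  have hle := norm_le_norm_mul_exp_of_norm_deriv_sub_smul_le (le_max_left t (max T N))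
    (fun x hx ↦ hw x (hT x hx)) fun x hx ↦ (hbound x (hT x hx)).trans <|
      mul_le_mul_of_nonneg_right ((le_abs_self _).trans (hC x hx)) (norm_nonneg _)
  simpa [hlate _ (le_max_right t (max T N))] using hle

end Uniqueness

section Riccati

variable {A : Type*} [NormedRing A]

lemma norm_mul_sq_sub_mul_sq_le (c x y : A) :
    ‖c * x ^ 2 - c * y ^ 2‖ ≤ ‖c‖ * (‖x‖ + ‖y‖) * ‖x - y‖ := by
  have hfactor : c * x ^ 2 - c * y ^ 2 = c * (x * (x - y) + (x - y) * y) := by noncomm_ring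
  calc ‖c * x ^ 2 - c * y ^ 2‖ ≤ ‖c‖ * ‖x * (x - y) + (x - y) * y‖ :=
        hfactor ▸ norm_mul_le _ _
    _ ≤ ‖c‖ * (‖x‖ * ‖x - y‖ + ‖x - y‖ * ‖y‖) := by
        gcongr
        exact norm_add_le_of_le (norm_mul_le _ _) (norm_mul_le _ _)
    _ = ‖c‖ * (‖x‖ + ‖y‖) * ‖x - y‖ := by ring

lemma lipschitzOnWith_mul_sq_add {c : A} {r : ℝ} {K : ℝ≥0} (hK : ‖c‖ * (2 * r) ≤ K) (d : A) :
    LipschitzOnWith K (fun x ↦ c * x ^ 2 + d) (closedBall 0 r) := by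
  refine LipschitzOnWith.of_dist_le_mul fun x hx y hy ↦ ?_
  rw [mem_closedBall_zero_iff] at hx hy
  rw [dist_add_right, dist_eq_norm, dist_eq_norm]
  refine (norm_mul_sq_sub_mul_sq_le c x y).trans ?_
  gcongr
  refine le_trans ?_ hK
  gcongr
  linarith

variable [NormedAlgebra ℝ A] {a T₀ : ℝ} {α β u u₁ u₂ : ℝ → A}

/-- `u` is differentiable and solves the Riccati equation `u' - a u = α u² + β` on `[T₀, ∞)`, and
it tends to zero at infinity. As `u` is a function on all of `ℝ`, differentiability at `T₀` is
two-sided. -/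
structure IsDecayingRiccatiSolution (a : ℝ) (α β : ℝ → A) (T₀ : ℝ) (u : ℝ → A) : Prop where
  differentiableAt : ∀ t ≥ T₀, DifferentiableAt ℝ u t
  deriv_sub_smul : ∀ t ≥ T₀, deriv u t - a • u t = α t * u t ^ 2 + β t
  tendsto_zero : Tendsto u atTop (𝓝 0)

theorem IsDecayingRiccatiSolution.eqOn (ha : 0 < a) {C : ℝ} (hα : ContinuousOn α (Ici T₀))
    (hαC : ∀ t ≥ T₀, ‖α t‖ ≤ C) (h₁ : IsDecayingRiccatiSolution a α β T₀ u₁)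
    (h₂ : IsDecayingRiccatiSolution a α β T₀ u₂) : EqOn u₁ u₂ (Ici T₀) := by
  have hcont : ∀ {u}, IsDecayingRiccatiSolution a α β T₀ u → ContinuousOn u (Ici T₀) :=
    fun h t ht ↦ (h.differentiableAt t ht).continuousAt.continuousWithinAt
  let k : ℝ → ℝ := fun t ↦ ‖α t‖ * (‖u₁ t‖ + ‖u₂ t‖)
  have hk : ContinuousOn k (Ici T₀) := hα.norm.mul ((hcont h₁).norm.add (hcont h₂).norm)
  have hk_lim : Tendsto k atTop (𝓝 0) :=
    isBoundedUnder_le_mul_tendsto_zero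
      ⟨C, (eventually_ge_atTop T₀).mono fun t ht ↦ by simpa using hαC t ht⟩
      (by simpa using h₁.tendsto_zero.norm.add h₂.tendsto_zero.norm)
  have hbound : ∀ t ≥ T₀, ‖(deriv u₁ t - deriv u₂ t) - a • (u₁ t - u₂ t)‖
      ≤ k t * ‖u₁ t - u₂ t‖ := by
    intro t ht
    rw [smul_sub, sub_sub_sub_comm, h₁.deriv_sub_smul t ht, h₂.deriv_sub_smul t ht,
      add_sub_add_right_eq_sub]
    exact norm_mul_sq_sub_mul_sq_le _ _ _
  exact fun t ht ↦ sub_eq_zero.1 <| eq_zero_of_norm_deriv_sub_smul_le_of_tendsto_zero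
    (w := fun t ↦ u₁ t - u₂ t)
    (fun t ht ↦ (h₁.differentiableAt t ht).hasDerivAt.sub (h₂.differentiableAt t ht).hasDerivAt)
    hk hbound (hk_lim.eventually_le_const ha) (by simpa using h₁.tendsto_zero.sub h₂.tendsto_zero)
    t ht

theorem exists_isDecayingRiccatiSolution [CompleteSpace A] {r : ℝ} {K : ℝ≥0}
    (hK : K < a) (hα : ContinuousOn α (Ici T₀)) (hβ : ContinuousOn β (Ici T₀))
    (hα_le : ∀ t ≥ T₀, ‖α t‖ * (2 * r) ≤ K) (hβ_le : ∀ t ≥ T₀, ‖β t‖ ≤ (a - K) * r)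
    (hβ_lim : Tendsto β atTop (𝓝 0)) :
    ∃ u, IsDecayingRiccatiSolution a α β T₀ u ∧ ∀ t, ‖u t‖ ≤ r := by
  -- Freezing the coefficients before `T₀` makes the equation global, so that the solution is
  -- differentiable on both sides of `T₀`.
  have hmax : ∀ t, max t T₀ ∈ Ici T₀ := fun t ↦ le_max_right t T₀
  have hα' : Continuous fun t ↦ α (max t T₀) := hα.comp_continuous (by fun_prop) hmax
  have hβ' : Continuous fun t ↦ β (max t T₀) := hβ.comp_continuous (by fun_prop) hmax
  have hF : Continuous fun p : ℝ × A ↦ α (max p.1 T₀) * p.2 ^ 2 + β (max p.1 T₀) :=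
    ((hα'.comp continuous_fst).mul (continuous_snd.pow 2)).add (hβ'.comp continuous_fst)
  have hβ_lim' : Tendsto (fun t ↦ β (max t T₀)) atTop (𝓝 0) :=
    hβ_lim.congr' <| (eventually_ge_atTop T₀).mono fun t ht ↦
      congrArg β (max_eq_left ht).symm
  obtain ⟨u, hderiv, hu_le, hu_lim⟩ := exists_decaying_solution_of_lipschitzOnWith
    (F := fun t x ↦ α (max t T₀) * x ^ 2 + β (max t T₀)) hK hF
    (fun t ↦ lipschitzOnWith_mul_sq_add (hα_le _ (hmax t)) _)
    (fun t ↦ by simpa using hβ_le _ (hmax t)) (by simpa using hβ_lim')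
  refine ⟨u, ⟨fun t _ ↦ (hderiv t).differentiableAt, fun t ht ↦ ?_, hu_lim⟩, hu_le⟩
  rw [(hderiv t).deriv, max_eq_left ht, add_sub_cancel_left]

end Riccati

lemma tendsto_exp_mul_mul_zero_of_bounded {c K T : ℝ} (hc : c < 0) {f : ℝ → ℝ}
    (hf : ∀ t ≥ T, |f t| ≤ K) : Tendsto (fun t ↦ exp (c * t) * f t) atTop (𝓝 0) :=
  (tendsto_exp_atBot.comp (tendsto_id.const_mul_atTop_of_neg hc)).zero_mul_isBoundedUnder_le
    ⟨K, eventually_map.2 ((eventually_ge_atTop T).mono hf)⟩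

theorem fuchsian_trace_k_existence_uniqueness_general {A : Type*} [NormedRing A]
    [NormedAlgebra ℝ A] [CompleteSpace A] {a T C : ℝ} (ha : 0 < a) {α β : ℝ → A}
    (hα : ContinuousOn α (Ici T)) (hαC : ∀ t ≥ T, ‖α t‖ ≤ C)
    (hβ : ContinuousOn β (Ici T)) (hβ_lim : Tendsto β atTop (𝓝 0)) :
    ∃ T₀ ≥ T,
      (∃ u, IsDecayingRiccatiSolution a α β T₀ u ∧ ∃ M, ∀ t ≥ T₀, ‖u t‖ ≤ M) ∧
      ∀ u₁ u₂, IsDecayingRiccatiSolution a α β T₀ u₁ → IsDecayingRiccatiSolution a α β T₀ u₂ →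
        EqOn u₁ u₂ (Ici T₀) := by
  have hC : 0 ≤ C := (norm_nonneg _).trans (hαC T le_rfl)
  -- This radius makes the nonlinearity `a / 2`-Lipschitz on the `r`-ball.
  let r := a / (4 * (C + 1))
  have hCr : C * (2 * r) ≤ a / 2 := by
    simp only [r]
    field_simp
    linarith
  have hβ_small : ∀ᶠ t in atTop, ‖β t‖ ≤ a / 2 * r :=
    (tendsto_zero_iff_norm_tendsto_zero.1 hβ_lim).eventually_le_const (by positivity)
  obtain ⟨N, hN⟩ := eventually_atTop.1 hβ_small
  obtain ⟨K, hK⟩ : ∃ K : ℝ≥0, (K : ℝ) = a / 2 := ⟨⟨a / 2, by positivity⟩, rfl⟩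
  have hT : Ici (max T N) ⊆ Ici T := Ici_subset_Ici.2 (le_max_left T N)
  have hα_le : ∀ t ≥ max T N, ‖α t‖ * (2 * r) ≤ K := fun t ht ↦
    (mul_le_mul_of_nonneg_right (hαC t (hT ht)) (by positivity)).trans (hCr.trans_eq hK.symm)
  have hβ_le : ∀ t ≥ max T N, ‖β t‖ ≤ (a - K) * r := fun t ht ↦ by
    rw [hK, sub_half]
    exact hN t ((le_max_right T N).trans ht)
  obtain ⟨u, hu, hu_le⟩ := exists_isDecayingRiccatiSolution (hK.trans_lt (half_lt_self ha))
    (hα.mono hT) (hβ.mono hT) hα_le hβ_le hβ_lim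
  exact ⟨max T N, le_max_left T N, ⟨u, hu, r, fun t _ ↦ hu_le t⟩,
    fun u₁ u₂ h₁ h₂ ↦ h₁.eqOn ha (hα.mono hT) (fun t ht ↦ hαC t (hT ht)) h₂⟩

/-- the trace-part Fuchsian equation
∂_t u - (ε+v)u = e^{-εt}u² + e^{(ε-v)t}f has, for T sufficiently large, a unique
bounded differentiable solution on [T₀,∞) tending to 0 at t → ∞. -/
theorem fuchsian_trace_k_existence_uniqueness
    (ε v T : ℝ) (hε : 0 < ε) (hv : ε < v)
    (f : ℝ → ℝ) (hf : ContinuousOn f (Set.Ici T))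
    (K : ℝ) (hK : ∀ t ≥ T, |f t| ≤ K) :
    ∃ T₀ ≥ T,
      (∃ u : ℝ → ℝ,
        (∀ t ≥ T₀, DifferentiableAt ℝ u t) ∧
        (∃ M : ℝ, ∀ t ≥ T₀, |u t| ≤ M) ∧
        (∀ t ≥ T₀, deriv u t - (ε + v) * u t
            = Real.exp (-ε * t) * (u t) ^ 2 + Real.exp ((ε - v) * t) * f t) ∧
        Filter.Tendsto u Filter.atTop (nhds 0)) ∧
      (∀ u₁ u₂ : ℝ → ℝ,
        ((∀ t ≥ T₀, DifferentiableAt ℝ u₁ t) ∧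
         (∃ M : ℝ, ∀ t ≥ T₀, |u₁ t| ≤ M) ∧
         (∀ t ≥ T₀, deriv u₁ t - (ε + v) * u₁ t
             = Real.exp (-ε * t) * (u₁ t) ^ 2 + Real.exp ((ε - v) * t) * f t) ∧
         Filter.Tendsto u₁ Filter.atTop (nhds 0)) →
        ((∀ t ≥ T₀, DifferentiableAt ℝ u₂ t) ∧
         (∃ M : ℝ, ∀ t ≥ T₀, |u₂ t| ≤ M) ∧
         (∀ t ≥ T₀, deriv u₂ t - (ε + v) * u₂ t
             = Real.exp (-ε * t) * (u₂ t) ^ 2 + Real.exp ((ε - v) * t) * f t) ∧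
         Filter.Tendsto u₂ Filter.atTop (nhds 0)) →
        Set.EqOn u₁ u₂ (Set.Ici T₀)) := by
  have hexp_le : ∀ t ≥ T, ‖exp (-ε * t)‖ ≤ exp (-ε * T) := fun t ht ↦ by
    rw [norm_of_nonneg (exp_nonneg _)]
    exact exp_le_exp.2 (mul_le_mul_of_nonpos_left ht (neg_nonpos.2 hε.le))
  obtain ⟨T₀, hT₀, ⟨u, ⟨hd, he, hl⟩, hM⟩, huniq⟩ :=
    fuchsian_trace_k_existence_uniqueness_general (add_pos hε (hε.trans hv)) (by fun_prop)
      hexp_le (ContinuousOn.mul (by fun_prop) hf)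
      (tendsto_exp_mul_mul_zero_of_bounded (sub_neg.2 hv) hK)
  exact ⟨T₀, hT₀, ⟨u, hd, hM, he, hl⟩, fun u₁ u₂ ⟨hd₁, _, he₁, hl₁⟩ ⟨hd₂, _, he₂, hl₂⟩ ↦
    huniq u₁ u₂ ⟨hd₁, he₁, hl₁⟩ ⟨hd₂, he₂, hl₂⟩⟩
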